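/- arXiv:2209.11454 — 2 statements merged into one kernel-verified Lean document; each statement's English description precedes it below -/
import Mathlib

section
/- Let k ≥ 2 be an integer. Let S ⊂ ℍ be a finite union of SL₂(ℤ)-orbits and let f : ℍ ∖ S → ℂ be holomorphic with f(γz) = (cz+d)^{2k}·f(z) for all γ = (a b; c d) ∈ SL₂(ℤ), and such that for every ϱ ∈ S there exists a REAL number a_ϱ for which z ↦ f(z) − a_ϱ·((z−ϱ)(z−conj(ϱ))/(ϱ−conj(ϱ)))^{−k} is bounded on a punctured neighborhood of ϱ. Then for every primitive hyperbolic γ ∈ SL₂(ℤ) and every z₀ ∈ ℍ ∖ S, the value Re( (i/√(d_γ))^{k−1} ∫_σ f(z)·Q_γ(z,1)^{k−1} dz ) is the same for all piecewise continuously differentiable paths σ in ℍ ∖ S from z₀ to γz₀. -/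
open Complex ComplexConjugate Metric Set MeasureTheory

noncomputable section

/-- The upper half-plane, as a subset of `ℂ`. -/
def UH : Set ℂ := {z | 0 < z.im}

abbrev SL2Z := Matrix.SpecialLinearGroup (Fin 2) ℤ

/-- The Möbius action `γz = (az+b)/(cz+d)` of `SL₂(ℤ)` on the upper half-plane
(written as a map on `ℂ`). -/
def moeb (γ : SL2Z) (z : ℂ) : ℂ :=
  ((γ.1 0 0 : ℂ) * z + (γ.1 0 1 : ℂ)) / ((γ.1 1 0 : ℂ) * z + (γ.1 1 1 : ℂ))

/-- The `SL₂(ℤ)`-orbit of a point `ϱ`. -/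
def orbit (ϱ : ℂ) : Set ℂ := {z | ∃ γ : SL2Z, z = moeb γ ϱ}

/-- `γ ∈ SL₂(ℤ)` is hyperbolic if `|a + d| > 2`. -/
def IsHyperbolic (γ : SL2Z) : Prop := 2 < |γ.1 0 0 + γ.1 1 1|

/-- `γ ∈ SL₂(ℤ)` is primitive if it is not a power `γ₀^m`, `m ≥ 2`, of another element. -/
def IsPrimitive (γ : SL2Z) : Prop := ¬∃ (γ₀ : SL2Z) (m : ℕ), 2 ≤ m ∧ γ = γ₀ ^ m

/-- The binary quadratic form `Q_γ(z,1) = cz² + (d−a)z − b` attached to `γ`. -/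
def Qpoly (γ : SL2Z) (z : ℂ) : ℂ :=
  (γ.1 1 0 : ℂ) * z ^ 2 + ((γ.1 1 1 - γ.1 0 0 : ℤ) : ℂ) * z - (γ.1 0 1 : ℂ)

/-- The discriminant `d_γ = (a+d)² − 4` of `Q_γ`. -/
def discr (γ : SL2Z) : ℝ := ((γ.1 0 0 + γ.1 1 1 : ℤ) : ℝ) ^ 2 - 4

/-- The factor `(i/√(d_γ))^(k−1)` appearing in the geodesic pairing. -/
def geodFactor (k : ℕ) (γ : SL2Z) : ℂ := (Complex.I / (Real.sqrt (discr γ) : ℂ)) ^ (k - 1)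

/-- Complex line integral of `f` along the path `σ : [0,1] → ℂ`. -/
def pathInt (f : ℂ → ℂ) (σ : ℝ → ℂ) : ℂ := ∫ t in (0 : ℝ)..1, f (σ t) * deriv σ t

/-- `σ : [0,1] → ℂ` is a piecewise continuously differentiable path. -/
def PiecewiseC1 (σ : ℝ → ℂ) : Prop :=
  ContinuousOn σ (Set.Icc 0 1) ∧
    ∃ (n : ℕ) (t : ℕ → ℝ), 0 < n ∧ t 0 = 0 ∧ t n = 1 ∧ (∀ i < n, t i ≤ t (i + 1)) ∧
      ∀ i < n, ContDiffOn ℝ 1 σ (Set.Icc (t i) (t (i + 1)))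

/-- The elliptic pole term `((z−ϱ)(z−conj ϱ)/(ϱ−conj ϱ))^(−k)`. -/
def polePart (k : ℕ) (ϱ z : ℂ) : ℂ :=
  ((z - ϱ) * (z - conj ϱ) / (ϱ - conj ϱ)) ^ (-(k : ℤ))

open Filter Topology

/-- The real linear form `v ↦ Re (a v)`. -/
def RL (a : ℂ) : ℂ →L[ℝ] ℝ := reCLM.comp (ContinuousLinearMap.mul ℝ ℂ a)

lemma RL_apply (a v : ℂ) : RL a v = (a * v).re := rfl

/-- `Re (g dz)` has a primitive on `V`. -/
def RP (V : Set ℂ) (g : ℂ → ℂ) : Prop := ∃ H : ℂ → ℝ, ∀ z ∈ V, HasFDerivAt H (RL (g z)) z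

lemma RP.mono {V W : Set ℂ} {g : ℂ → ℂ} (h : RP V g) (hW : W ⊆ V) : RP W g := by
  obtain ⟨H, hH⟩ := h
  exact ⟨H, fun z hz => hH z (hW hz)⟩

lemma RP.congr {V : Set ℂ} {g g' : ℂ → ℂ} (h : RP V g) (hg : ∀ z ∈ V, g' z = g z) : RP V g' := by
  obtain ⟨H, hH⟩ := h
  exact ⟨H, fun z hz => by rw [hg z hz]; exact hH z hz⟩

lemma RP.add {V : Set ℂ} {g g' : ℂ → ℂ} (h : RP V g) (h' : RP V g') :
    RP V (fun z => g z + g' z) := by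
  obtain ⟨H, hH⟩ := h
  obtain ⟨H', hH'⟩ := h'
  refine ⟨fun z => H z + H' z, fun z hz => ?_⟩
  have := (hH z hz).add (hH' z hz)
  exact this.congr_fderiv (by refine ContinuousLinearMap.ext fun v => ?_; simp [RL_apply, add_mul, mul_assoc])

lemma RP.smul {V : Set ℂ} {g : ℂ → ℂ} (h : RP V g) (r : ℝ) : RP V (fun z => (r : ℂ) * g z) := by
  obtain ⟨H, hH⟩ := h
  refine ⟨fun z => r * H z, fun z hz => ?_⟩
  have := (hH z hz).const_mul r
  exact this.congr_fderiv (by refine ContinuousLinearMap.ext fun v => ?_; simp [RL_apply, add_mul, mul_assoc])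

lemma RP.zero (V : Set ℂ) : RP V (fun _ => 0) := by
  refine ⟨fun _ => 0, fun z _ => ?_⟩
  exact (hasFDerivAt_const (0 : ℝ) z).congr_fderiv (by refine ContinuousLinearMap.ext fun v => ?_; simp [RL_apply])

lemma RP.sum {ι : Type*} (T : Finset ι) {V : Set ℂ} {g : ι → ℂ → ℂ} (h : ∀ i ∈ T, RP V (g i)) :
    RP V (fun z => ∑ i ∈ T, g i z) := by
  classical
  induction T using Finset.induction_on with
  | empty => simpa using RP.zero V
  | insert a s ha ih =>
    have h1 := (h a (Finset.mem_insert_self a s)).add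
      (ih fun i hi => h i (Finset.mem_insert_of_mem hi))
    exact h1.congr fun z _ => by rw [Finset.sum_insert ha]

lemma hasFDerivAt_re {F : ℂ → ℂ} {a z : ℂ} (h : HasDerivAt F a z) :
    HasFDerivAt (fun z => (F z).re) (RL a) z := by
  have h1 := reCLM.hasFDerivAt.comp z (h.hasFDerivAt.restrictScalars ℝ)
  exact h1.congr_fderiv (by refine ContinuousLinearMap.ext fun v => ?_; simp [RL_apply, mul_comm, mul_left_comm])

lemma RP.of_primitive {V : Set ℂ} {g F : ℂ → ℂ} (h : ∀ z ∈ V, HasDerivAt F (g z) z) : RP V g :=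
  ⟨fun z => (F z).re, fun z hz => hasFDerivAt_re (h z hz)⟩

lemma RP.comp {V W : Set ℂ} {g w w' : ℂ → ℂ} (h : RP V g) (hw : ∀ z ∈ W, HasDerivAt w (w' z) z)
    (hVW : ∀ z ∈ W, w z ∈ V) : RP W (fun z => g (w z) * w' z) := by
  obtain ⟨H, hH⟩ := h
  refine ⟨fun z => H (w z), fun z hz => ?_⟩
  have h1 := (hH (w z) (hVW z hz)).comp z ((hw z hz).hasFDerivAt.restrictScalars ℝ)
  exact h1.congr_fderiv (by refine ContinuousLinearMap.ext fun v => ?_; simp [RL_apply, mul_comm, mul_left_comm])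

lemma RP.inv : RP {w | w ≠ 0} (fun w => w⁻¹) := by
  refine ⟨fun w => Real.log ‖w‖, fun w hw => ?_⟩
  have hw : w ≠ 0 := hw
  have h1 : HasDerivAt (fun u : ℂ => Complex.log (u / w)) (w⁻¹) w := by
    have h2 : HasDerivAt (fun u : ℂ => u / w) (1 / w) w := (hasDerivAt_id w).div_const w
    have h3 := h2.clog (by simp [hw])
    exact h3.congr_deriv (by simp [hw])
  have h4 := (hasFDerivAt_re h1).add_const (Real.log ‖w‖)
  refine h4.congr_of_eventuallyEq ?_
  filter_upwards [isOpen_ne.mem_nhds hw] with u hu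
  have hu : u ≠ 0 := hu
  rw [Complex.log_re, norm_div, Real.log_div (by simpa using hu) (by simpa using hw)]
  ring

/-- The generating real Laurent forms. -/
lemma RP.gen (b : ℂ) (j : ℤ) :
    RP {w | w ≠ 0} (fun w => (b * w ^ j + conj b * w ^ (-j)) * w⁻¹) := by
  by_cases hj : j = 0
  · subst hj
    refine (RP.inv.smul (2 * b.re)).congr fun w _ => ?_
    simp [Complex.add_conj]
  · have hj' : (j : ℂ) ≠ 0 := by exact_mod_cast hj
    refine RP.of_primitive (F := fun w => b / j * w ^ j - conj b / j * w ^ (-j)) fun w hw => ?_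
    have hw : w ≠ 0 := hw
    have h1 := ((hasDerivAt_zpow j w (Or.inl hw)).const_mul (b / j)).sub
      ((hasDerivAt_zpow (-j) w (Or.inl hw)).const_mul (conj b / j))
    refine h1.congr_deriv ?_
    rw [zpow_sub_one₀ hw, zpow_sub_one₀ hw]
    push_cast
    field_simp
    ring

lemma RP.laurent (A : ℂ) (m : ℝ) (N : ℕ) : ∀ (b : ℂ) (j : ℤ),
    RP {w | w ≠ 0} (fun w => (b * w ^ j + conj b * w ^ (-j)) *
      (A * w⁻¹ + m + conj A * w) ^ N * w⁻¹) := by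
  induction N with
  | zero => intro b j; simpa using RP.gen b j
  | succ N ih =>
    intro b j
    refine (((ih b j).smul m).add ((ih (b * A) (j - 1)).add (ih (b * conj A) (j + 1)))).congr
      fun w hw => ?_
    have hw : w ≠ 0 := hw
    have e1 : w ^ (j - 1) = w ^ j * w⁻¹ := zpow_sub_one₀ hw j
    have e2 : w ^ (j + 1) = w ^ j * w := zpow_add_one₀ hw j
    have e3 : w ^ (-(j - 1)) = w ^ (-j) * w := by
      rw [← zpow_add_one₀ hw]; congr 1; ring
    have e4 : w ^ (-(j + 1)) = w ^ (-j) * w⁻¹ := by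
      rw [← zpow_sub_one₀ hw]; congr 1; ring
    rw [e1, e2, e3, e4]
    simp only [map_mul, conj_conj]
    ring

lemma RP.laurent' (A : ℂ) (m : ℝ) (N : ℕ) :
    RP {w | w ≠ 0} (fun w => (A * w⁻¹ + m + conj A * w) ^ N * w⁻¹) := by
  refine (RP.laurent A m N (1/2) 0).congr fun w _ => ?_
  have : (conj (1/2 : ℂ)) = 1/2 := by
    rw [map_div₀, map_one, map_ofNat]
  rw [this]
  simp only [zpow_zero, neg_zero, mul_one]
  ring

lemma RP.polePart (N : ℕ) (γ : SL2Z) (ρ : ℂ) (hρ : ρ ∈ UH) :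
    RP (UH \ {ρ}) (fun z => geodFactor (N + 1) γ * (polePart (N + 1) ρ z * Qpoly γ z ^ N)) := by
  have hη : (ρ.im : ℂ) ≠ 0 := by
    have : 0 < ρ.im := hρ
    exact_mod_cast this.ne'
  have hD : ρ - conj ρ = 2 * ρ.im * I := by
    rw [Complex.sub_conj]; push_cast; ring
  set s : ℝ := Real.sqrt (discr γ) with hs
  set κ : ℝ := 1 / (2 * ρ.im * s) with hκ
  set c : ℤ := γ.1 1 0
  set e : ℤ := γ.1 1 1 - γ.1 0 0
  set b : ℤ := γ.1 0 1
  set m : ℝ := -(2 * c * normSq ρ + e * (2 * ρ.re) - 2 * b) with hm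
  have h1 := RP.laurent' (κ * Qpoly γ ρ) (κ * m) N
  have h2 := h1.comp (W := UH \ {ρ}) (w := fun z => (z - ρ) / (z - conj ρ))
    (w' := fun z => (ρ - conj ρ) / (z - conj ρ) ^ 2) ?_ ?_
  · refine h2.congr fun z hz => ?_
    have hB : z - conj ρ ≠ 0 := by
      intro h
      have := congrArg Complex.im h
      have h3 : 0 < z.im := hz.1
      have h4 : 0 < ρ.im := hρ
      simp at this
      linarith
    have hA : z - ρ ≠ 0 := sub_ne_zero.2 hz.2
    have hD0 : ρ - conj ρ ≠ 0 := by rw [hD]; simp [hη]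
    have hQ : Qpoly γ z * (ρ - conj ρ) ^ 2 = Qpoly γ ρ * (z - conj ρ) ^ 2
        + m * ((z - ρ) * (z - conj ρ)) + conj (Qpoly γ ρ) * (z - ρ) ^ 2 := by
      have hc : conj (Qpoly γ ρ) = c * (conj ρ) ^ 2 + e * conj ρ - b := by
        simp [Qpoly, c, e, b]
      have hm' : (m : ℂ) = -(2 * c * (ρ * conj ρ) + e * (ρ + conj ρ) - 2 * b) := by
        rw [hm, Complex.mul_conj, Complex.add_conj]; push_cast; ring
      rw [hc, hm']
      simp only [Qpoly]
      change ((c : ℂ) * z ^ 2 + (e : ℂ) * z - (b : ℂ)) * _ =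
        ((c : ℂ) * ρ ^ 2 + (e : ℂ) * ρ - (b : ℂ)) * _ + _ + _
      ring
    have hκ' : (κ : ℂ) = I / s / (ρ - conj ρ) := by
      rw [hκ, hD]; push_cast
      by_cases hs0 : (s : ℂ) = 0
      · simp [hs0]
      · field_simp
    have key : ((κ : ℂ) * Qpoly γ ρ) * ((z - ρ) / (z - conj ρ))⁻¹ + ((κ * m : ℝ) : ℂ)
        + conj ((κ : ℂ) * Qpoly γ ρ) * ((z - ρ) / (z - conj ρ))
        = I / s * Qpoly γ z * ((z - ρ) * (z - conj ρ) / (ρ - conj ρ))⁻¹ := by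
      have : Qpoly γ z = (Qpoly γ ρ * (z - conj ρ) ^ 2
        + m * ((z - ρ) * (z - conj ρ)) + conj (Qpoly γ ρ) * (z - ρ) ^ 2) / (ρ - conj ρ) ^ 2 := by
        rw [← hQ]; field_simp
      rw [this]
      simp only [map_mul, conj_ofReal]
      push_cast
      rw [hκ']
      field_simp
    rw [key]
    simp only [geodFactor, _root_.polePart, Nat.add_sub_cancel, zpow_neg, zpow_natCast]
    rw [← hs]
    simp only [mul_pow, inv_pow, pow_succ, mul_inv]
    field_simp
  · intro z hz
    have hB : z - conj ρ ≠ 0 := by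
      intro h
      have := congrArg Complex.im h
      have h3 : 0 < z.im := hz.1
      have h4 : 0 < ρ.im := hρ
      simp at this
      linarith
    have := ((hasDerivAt_id z).sub_const ρ).div ((hasDerivAt_id z).sub_const (conj ρ)) hB
    exact this.congr_deriv (by simp)
  · intro z hz
    have hB : z - conj ρ ≠ 0 := by
      intro h
      have := congrArg Complex.im h
      have h3 : 0 < z.im := hz.1
      have h4 : 0 < ρ.im := hρ
      simp at this
      linarith
    exact div_ne_zero (sub_ne_zero.2 hz.2) hB

lemma pathInt_re {V : Set ℂ} {g : ℂ → ℂ} {H : ℂ → ℝ} (hH : ∀ z ∈ V, HasFDerivAt H (RL (g z)) z)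
    (hg : ContinuousOn g V) {σ : ℝ → ℂ} (hσ : PiecewiseC1 σ)
    (hin : ∀ t ∈ Set.Icc (0 : ℝ) 1, σ t ∈ V) :
    (pathInt g σ).re = H (σ 1) - H (σ 0) := by
  obtain ⟨hc, n, t, hn, ht0, htn, hmono, hC1⟩ := hσ
  have hle : ∀ i j, i ≤ j → j ≤ n → t i ≤ t j := by
    intro i j hij
    induction j, hij using Nat.le_induction with
    | base => intro _; exact le_rfl
    | succ j hij ih => intro hj; exact (ih (by omega)).trans (hmono j (by omega))
  have hsub : ∀ i < n, Set.Icc (t i) (t (i + 1)) ⊆ Set.Icc 0 1 := by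
    intro i hi
    refine Set.Icc_subset_Icc ?_ ?_
    · rw [← ht0]; exact hle 0 i (by omega) (by omega)
    · rw [← htn]; exact hle _ _ (by omega) le_rfl
  have hderiv : ∀ i < n, ∀ x ∈ Set.Ioo (t i) (t (i + 1)), HasDerivAt σ (deriv σ x) x := by
    intro i hi x hx
    exact (((hC1 i hi).differentiableOn (by simp)).differentiableAt
      (Icc_mem_nhds hx.1 hx.2)).hasDerivAt
  have hint : ∀ i < n, IntervalIntegrable (fun x => g (σ x) * deriv σ x) volume
      (t i) (t (i + 1)) := by
    intro i hi
    rcases (hmono i hi).eq_or_lt with h | h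
    · rw [← h]
    have h1 : ContinuousOn (fun x => g (σ x) * derivWithin σ (Set.Icc (t i) (t (i + 1))) x)
        (Set.Icc (t i) (t (i + 1))) := by
      refine ContinuousOn.mul ?_ ?_
      · exact hg.comp (hc.mono (hsub i hi)) fun x hx => hin x (hsub i hi hx)
      · exact (hC1 i hi).continuousOn_derivWithin (uniqueDiffOn_Icc h) le_rfl
    have h2 := h1.intervalIntegrable_of_Icc (μ := volume) h.le
    refine (intervalIntegrable_congr_uIoo ?_).1 h2
    intro x hx
    rw [Set.uIoo_of_le h.le] at hx
    simp only
    rw [derivWithin_of_mem_nhds (Icc_mem_nhds hx.1 hx.2)]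
  have hpiece : ∀ i < n, (∫ x in (t i)..(t (i + 1)), g (σ x) * deriv σ x).re
      = H (σ (t (i + 1))) - H (σ (t i)) := by
    intro i hi
    have h1 := reCLM.intervalIntegral_comp_comm (hint i hi)
    have h2 : (∫ x in (t i)..(t (i + 1)), reCLM (g (σ x) * deriv σ x))
        = H (σ (t (i + 1))) - H (σ (t i)) := by
      refine intervalIntegral.integral_eq_sub_of_hasDerivAt_of_le (f := fun x => H (σ x))
        (hmono i hi) ?_ ?_ ?_
      · have hHc : ContinuousOn H V := fun z hz => (hH z hz).continuousAt.continuousWithinAt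
        exact hHc.comp (hc.mono (hsub i hi)) fun x hx => hin x (hsub i hi hx)
      · intro x hx
        exact (hH (σ x) (hin x (hsub i hi (Set.Ioo_subset_Icc_self hx)))).comp_hasDerivAt x
          (hderiv i hi x hx)
      · have hh := hint i hi
        exact ⟨reCLM.integrable_comp hh.1, reCLM.integrable_comp hh.2⟩
    rw [h2] at h1
    exact h1.symm
  have hsum := intervalIntegral.sum_integral_adjacent_intervals hint
  rw [ht0, htn] at hsum
  rw [pathInt, ← hsum, Complex.re_sum, Finset.sum_congr rfl
    (fun i hi => hpiece i (Finset.mem_range.1 hi)), Finset.sum_range_sub (fun i => H (σ (t i))),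
    ht0, htn]

lemma finite_pairs {ρ : ℂ} (hρ : 0 < ρ.im) (P : ℝ) :
    {p : ℤ × ℤ | ‖(p.1 : ℂ) * ρ + p.2‖ ≤ P}.Finite := by
  set M : ℝ := P / ρ.im with hM
  set M' : ℝ := P + M * ‖ρ‖ with hM'
  refine ((Set.finite_Icc (-⌈M⌉) ⌈M⌉).prod (Set.finite_Icc (-⌈M'⌉) ⌈M'⌉)).subset ?_
  rintro ⟨a, b⟩ h
  simp only [Set.mem_ofPred_eq] at h
  have h1 : |(a : ℝ)| ≤ M := by
    rw [hM, le_div_iff₀ hρ]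
    have := (Complex.abs_im_le_norm ((a : ℂ) * ρ + b)).trans h
    simpa [abs_mul, abs_of_pos hρ] using this
  have h2 : |(b : ℝ)| ≤ M' := by
    have e : (b : ℂ) = ((a : ℂ) * ρ + b) - a * ρ := by ring
    have : ‖(b : ℂ)‖ ≤ P + |(a : ℝ)| * ‖ρ‖ := by
      rw [e]
      refine (norm_sub_le _ _).trans (add_le_add h ?_)
      rw [norm_mul]; simp
    have h3 : ‖(b : ℂ)‖ = |(b : ℝ)| := by simp
    rw [h3] at this
    exact this.trans (by rw [hM']; gcongr)
  rw [abs_le] at h1 h2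
  simp only [Set.mem_prod, Set.mem_Icc]
  refine ⟨⟨?_, ?_⟩, ⟨?_, ?_⟩⟩
  · have := h1.1.trans' (neg_le_neg (Int.le_ceil M)); exact_mod_cast this
  · have := h1.2.trans (Int.le_ceil M); exact_mod_cast this
  · have := h2.1.trans' (neg_le_neg (Int.le_ceil M')); exact_mod_cast this
  · have := h2.2.trans (Int.le_ceil M'); exact_mod_cast this

lemma moeb_im (γ : SL2Z) (ρ : ℂ) :
    (moeb γ ρ).im * ‖(γ.1 1 0 : ℂ) * ρ + (γ.1 1 1 : ℂ)‖ ^ 2 = ρ.im ∨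
    (γ.1 1 0 : ℂ) * ρ + (γ.1 1 1 : ℂ) = 0 := by
  by_cases h0 : (γ.1 1 0 : ℂ) * ρ + (γ.1 1 1 : ℂ) = 0
  · exact Or.inr h0
  left
  have hdet : (γ.1 0 0 : ℝ) * γ.1 1 1 - γ.1 0 1 * γ.1 1 0 = 1 := by
    have := γ.2
    rw [Matrix.det_fin_two] at this
    exact_mod_cast this
  have hn : normSq ((γ.1 1 0 : ℂ) * ρ + (γ.1 1 1 : ℂ)) ≠ 0 := by simpa using h0
  rw [moeb, Complex.div_im, ← Complex.normSq_eq_norm_sq, sub_mul, div_mul_cancel₀ _ hn,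
    div_mul_cancel₀ _ hn]
  simp
  linear_combination ρ.im * hdet

lemma orbit_finite {ρ : ℂ} (hρ : ρ ∈ UH) {K : Set ℂ} (hK : IsCompact K) (hKU : K ⊆ UH) :
    (orbit ρ ∩ K).Finite := by
  have hρ : 0 < ρ.im := hρ
  rcases K.eq_empty_or_nonempty with rfl | hne
  · simp
  obtain ⟨z1, hz1, hmin⟩ := hK.exists_isMinOn hne Complex.continuous_im.continuousOn
  have hε : 0 < z1.im := hKU hz1
  obtain ⟨M, hM⟩ := hK.isBounded.exists_norm_le
  have hM0 : 0 ≤ M := (norm_nonneg _).trans (hM z1 hz1)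
  set P : ℝ := ρ.im / z1.im + 1 with hP
  refine (((finite_pairs hρ (M * P)).prod (finite_pairs hρ P)).image
    (fun q => ((q.1.1 : ℂ) * ρ + q.1.2) / ((q.2.1 : ℂ) * ρ + q.2.2))).subset ?_
  rintro z ⟨⟨g, rfl⟩, hz⟩
  have hzi : z1.im ≤ (moeb g ρ).im := hmin hz
  rcases moeb_im g ρ with h | h
  · have h1 : ‖(g.1 1 0 : ℂ) * ρ + (g.1 1 1 : ℂ)‖ ≤ P := by
      set x := ‖(g.1 1 0 : ℂ) * ρ + (g.1 1 1 : ℂ)‖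
      have h2 : x ^ 2 ≤ ρ.im / z1.im := by
        rw [le_div_iff₀ hε]
        nlinarith [sq_nonneg x]
      nlinarith [sq_nonneg (x - 1)]
    have hne : (g.1 1 0 : ℂ) * ρ + (g.1 1 1 : ℂ) ≠ 0 := by
      intro h0
      rw [h0] at h
      simp at h
      linarith
    refine ⟨((g.1 0 0, g.1 0 1), (g.1 1 0, g.1 1 1)), ⟨?_, h1⟩, rfl⟩
    have h3 : (g.1 0 0 : ℂ) * ρ + (g.1 0 1 : ℂ) =
        moeb g ρ * ((g.1 1 0 : ℂ) * ρ + (g.1 1 1 : ℂ)) := by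
      rw [moeb, div_mul_cancel₀ _ hne]
    simp only [Set.mem_ofPred_eq]
    rw [h3, norm_mul]
    exact mul_le_mul (hM _ hz) h1 (norm_nonneg _) hM0
  · exfalso
    have : moeb g ρ = 0 := by rw [moeb, h, div_zero]
    rw [this] at hzi
    simp at hzi
    linarith

lemma removable {V : Set ℂ} (hV : IsOpen V) (T : Finset ℂ) {h : ℂ → ℂ}
    (hd : DifferentiableOn ℂ h (V \ T))
    (hb : ∀ ρ ∈ T, ρ ∈ V → h =O[𝓝[≠] ρ] (fun _ => (1 : ℂ))) :
    ∃ h' : ℂ → ℂ, DifferentiableOn ℂ h' V ∧ ∀ z ∈ V \ T, h' z = h z := by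
  classical
  set h' : ℂ → ℂ := fun z => if z ∈ T then limUnder (𝓝[≠] z) h else h z with hh'
  refine ⟨h', fun z hz => ?_, fun z hz => by simp only [hh']; rw [if_neg]; simpa using hz.2⟩
  have hs : IsOpen (V \ (T.erase z : Set ℂ)) := hV.sdiff (Finset.finite_toSet _).isClosed
  have hzs : z ∈ V \ (T.erase z : Set ℂ) := ⟨hz, by simp⟩
  have hsn := hs.mem_nhds hzs
  refine DifferentiableAt.differentiableWithinAt ?_
  by_cases hzT : z ∈ T
  · have h1 : DifferentiableOn ℂ (Function.update h z (limUnder (𝓝[≠] z) h))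
        (V \ (T.erase z : Set ℂ)) := by
      refine differentiableOn_update_limUnder_of_isLittleO hsn ?_ ?_
      · refine hd.mono ?_
        rintro w ⟨⟨hw1, hw2⟩, hw3⟩
        refine ⟨hw1, fun hwT => hw2 ?_⟩
        simp only [Finset.coe_erase]
        exact ⟨hwT, hw3⟩
      · have h2 : (fun w => h w - h z) =O[𝓝[≠] z] (fun _ => (1 : ℂ)) :=
          (hb z hzT hz).sub (Asymptotics.isBigO_const_const _ one_ne_zero _)
        exact IsBoundedUnder.isLittleO_sub_self_inv ((Asymptotics.isBigO_one_iff ℂ).1 h2)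
    refine (h1.differentiableAt hsn).congr_of_eventuallyEq ?_
    filter_upwards [hsn] with w hw
    by_cases hwz : w = z
    · subst hwz; simp [hh', hzT]
    · have : w ∉ T := fun hwT => hw.2 (by simp [hwz, hwT])
      simp [hh', this, hwz]
  · have hz' : V \ (T : Set ℂ) ∈ 𝓝 z :=
      (hV.sdiff (Finset.finite_toSet _).isClosed).mem_nhds ⟨hz, by simpa using hzT⟩
    refine (hd.differentiableAt hz').congr_of_eventuallyEq ?_
    filter_upwards [hz'] with w hw
    have : w ∉ T := by simpa using hw.2
    simp [hh', this]

lemma exists_ball {K : Set ℂ} (hK : IsCompact K) (hKU : K ⊆ UH) :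
    ∃ (c : ℂ) (r : ℝ), K ⊆ Metric.ball c r ∧ Metric.closedBall c r ⊆ UH := by
  rcases K.eq_empty_or_nonempty with rfl | hne
  · refine ⟨0, -1, by simp, ?_⟩
    rw [Metric.closedBall_eq_empty.2 (by norm_num)]; simp
  obtain ⟨z1, hz1, hmin⟩ := hK.exists_isMinOn hne Complex.continuous_im.continuousOn
  have hε : 0 < z1.im := hKU hz1
  obtain ⟨M, hM⟩ := hK.isBounded.exists_norm_le
  set R : ℝ := (M ^ 2 + 1) / z1.im with hR
  have hR0 : 0 < R := by positivity
  have hRz : R * z1.im = M ^ 2 + 1 := by rw [hR]; field_simp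
  have hlt : ∀ z ∈ K, dist z (R * I) < R := by
    intro z hz
    have h1 : z1.im ≤ z.im := hmin hz
    have h2 : ‖z‖ ^ 2 ≤ M ^ 2 := by gcongr; exact hM z hz
    rw [← Complex.normSq_eq_norm_sq, Complex.normSq_apply] at h2
    refine lt_of_pow_lt_pow_left₀ 2 hR0.le ?_
    rw [Complex.dist_eq, ← Complex.normSq_eq_norm_sq, Complex.normSq_apply]
    simp
    nlinarith
  obtain ⟨z2, hz2, hmax⟩ := hK.exists_isMaxOn hne
    (f := fun z => dist z (R * I)) (by fun_prop)
  have h2 := hlt z2 hz2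
  refine ⟨R * I, (dist z2 (R * I) + R) / 2, ?_, ?_⟩
  · intro z hz
    have : dist z (R * I) ≤ dist z2 (R * I) := hmax hz
    rw [Metric.mem_ball]
    linarith
  · intro z hz
    rw [Metric.mem_closedBall, Complex.dist_eq] at hz
    have h3 := (Complex.abs_im_le_norm _).trans hz
    simp at h3
    rw [abs_le] at h3
    change 0 < z.im
    linarith [h3.1]

lemma polePart_diff (k : ℕ) {ρ z : ℂ} (hρ : ρ ∈ UH) (hz : z ∈ UH) (hne : z ≠ ρ) :
    DifferentiableAt ℂ (polePart k ρ) z := by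
  have h3 : 0 < z.im := hz
  have h4 : 0 < ρ.im := hρ
  have hB : z - conj ρ ≠ 0 := by
    intro h
    have := congrArg Complex.im h
    simp at this
    linarith
  have hD : ρ - conj ρ ≠ 0 := by
    intro h
    have := congrArg Complex.im h
    simp at this
    linarith
  have hA : z - ρ ≠ 0 := sub_ne_zero.2 hne
  unfold polePart
  refine DifferentiableAt.zpow ?_ (Or.inl ?_)
  · fun_prop
  · exact div_ne_zero (mul_ne_zero hA hB) hD

lemma Qpoly_diff (γ : SL2Z) : Differentiable ℂ (Qpoly γ) := by
  unfold Qpoly; fun_prop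

lemma main_RP (N : ℕ) (S : Set ℂ) (f : ℂ → ℂ)
    (hf : DifferentiableOn ℂ f (UH \ S))
    (hpole : ∀ ρ ∈ S, ∃ aρ : ℝ, ∃ δ > 0, ∃ Cb : ℝ,
      ∀ z ∈ (Metric.ball ρ δ \ {ρ}) ∩ (UH \ S),
        ‖f z - (aρ : ℂ) * polePart (N + 1) ρ z‖ ≤ Cb)
    (γ : SL2Z) (c : ℂ) (r : ℝ) (hV : Metric.ball c r ⊆ UH) (hfin : (S ∩ Metric.ball c r).Finite) :
    RP (Metric.ball c r \ S) (fun z => geodFactor (N + 1) γ * (f z * Qpoly γ z ^ N)) := by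
  classical
  choose! a δ hδ Cb hCb using hpole
  set V := Metric.ball c r with hVdef
  have hVo : IsOpen V := Metric.isOpen_ball
  set T : Finset ℂ := hfin.toFinset with hT
  have hTm : ∀ ρ, ρ ∈ T ↔ ρ ∈ S ∧ ρ ∈ V := by intro ρ; simp [hT]
  have hVT : V \ (T : Set ℂ) = V \ S := by
    ext z
    simp only [Set.mem_sdiff, Finset.mem_coe, hTm]
    tauto
  set h : ℂ → ℂ := fun z => f z * Qpoly γ z ^ N
    - ∑ ρ ∈ T, (a ρ : ℂ) * (polePart (N + 1) ρ z * Qpoly γ z ^ N) with hh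
  have hdp : ∀ ρ ∈ T, ∀ z ∈ V, z ≠ ρ → DifferentiableAt ℂ
      (fun z => (a ρ : ℂ) * (polePart (N + 1) ρ z * Qpoly γ z ^ N)) z := by
    intro ρ hρ z hz hne
    exact ((polePart_diff (N + 1) (hV ((hTm ρ).1 hρ).2) (hV hz) hne).mul
      ((Qpoly_diff γ z).pow N)).const_mul _
  have hd : DifferentiableOn ℂ h (V \ T) := by
    refine DifferentiableOn.sub ?_ ?_
    · refine DifferentiableOn.mul ?_ ((Qpoly_diff γ).pow N).differentiableOn
      rw [hVT]
      exact hf.mono (Set.sdiff_subset_sdiff_left hV)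
    · refine DifferentiableOn.fun_sum fun ρ hρ => ?_
      intro z hz
      refine (hdp ρ hρ z hz.1 ?_).differentiableWithinAt
      rintro rfl
      exact hz.2 hρ
  have hb : ∀ ρ ∈ T, ρ ∈ V → h =O[𝓝[≠] ρ] (fun _ => (1 : ℂ)) := by
    intro ρ hρ hρV
    have e : h = fun z => (f z - (a ρ : ℂ) * polePart (N + 1) ρ z) * Qpoly γ z ^ N
        - ∑ ρ' ∈ T.erase ρ, (a ρ' : ℂ) * (polePart (N + 1) ρ' z * Qpoly γ z ^ N) := by
      funext z
      simp only [hh]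
      rw [← Finset.add_sum_erase T _ hρ]
      ring
    rw [e]
    refine Asymptotics.IsBigO.sub ?_ ?_
    · have h1 : (fun z => f z - (a ρ : ℂ) * polePart (N + 1) ρ z) =O[𝓝[≠] ρ]
          (fun _ => (1 : ℂ)) := by
        refine Asymptotics.IsBigO.of_bound (Cb ρ) ?_
        have hn : V \ (T.erase ρ : Set ℂ) ∈ 𝓝 ρ :=
          (hVo.sdiff (Finset.finite_toSet _).isClosed).mem_nhds ⟨hρV, by simp⟩
        have hρS := ((hTm ρ).1 hρ).1
        filter_upwards [self_mem_nhdsWithin, mem_nhdsWithin_of_mem_nhds hn,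
          mem_nhdsWithin_of_mem_nhds (Metric.ball_mem_nhds ρ (hδ ρ hρS))] with z hz1 hz2 hz3
        have := hCb ρ hρS z ⟨⟨hz3, hz1⟩, hV hz2.1, fun hzS => hz2.2 ?_⟩
        · simpa using this
        · simp only [Finset.coe_erase]
          exact ⟨(hTm z).2 ⟨hzS, hz2.1⟩, hz1⟩
      have h2 : (fun z => Qpoly γ z ^ N) =O[𝓝[≠] ρ] (fun _ => (1 : ℂ)) :=
        ((((Qpoly_diff γ).pow N).continuous.continuousAt (x := ρ)).mono_left
          nhdsWithin_le_nhds).isBigO_one ℂ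
      simpa using h1.mul h2
    · refine Asymptotics.IsBigO.fun_sum (g := fun _ => (1 : ℂ)) fun ρ' hρ' => ?_
      rw [Finset.mem_erase] at hρ'
      exact ((hdp ρ' hρ'.2 ρ hρV hρ'.1.symm).continuousAt.mono_left
          nhdsWithin_le_nhds).isBigO_one ℂ
  obtain ⟨h', hd', heq⟩ := removable hVo T hd hb
  obtain ⟨F, hF⟩ := (hd'.const_mul (geodFactor (N + 1) γ)).isExactOn_ball
  have r1 : RP (V \ S) (fun z => geodFactor (N + 1) γ * h' z) :=
    (RP.of_primitive (F := F) fun z hz => hF z hz).mono Set.sdiff_subset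
  have r2 : RP (V \ S) (fun z => ∑ ρ ∈ T, (a ρ : ℂ) *
      (geodFactor (N + 1) γ * (polePart (N + 1) ρ z * Qpoly γ z ^ N))) := by
    refine RP.sum T fun ρ hρ => RP.smul ?_ (a ρ)
    refine (RP.polePart N γ ρ (hV ((hTm ρ).1 hρ).2)).mono fun z hz => ⟨hV hz.1, ?_⟩
    rintro rfl
    exact hz.2 ((hTm _).1 hρ).1
  refine (r1.add r2).congr fun z hz => ?_
  rw [heq z (hVT ▸ hz)]
  simp only [hh]
  have : ∀ ρ ∈ T, (a ρ : ℂ) * (geodFactor (N + 1) γ * (polePart (N + 1) ρ z * Qpoly γ z ^ N))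
      = geodFactor (N + 1) γ * ((a ρ : ℂ) * (polePart (N + 1) ρ z * Qpoly γ z ^ N)) :=
    fun ρ _ => by ring
  rw [Finset.sum_congr rfl this, ← Finset.mul_sum]
  ring

/-- Path independence of the geodesic pairing: if `f` is holomorphic on `ℍ ∖ S`, where `S`
is a finite union of `SL₂(ℤ)`-orbits, transforms with weight `2k`, and has poles of order
`k` with *real* leading elliptic coefficients at the points of `S`, then for every primitive
hyperbolic `γ` and `z₀ ∈ ℍ ∖ S`, the value
`Re((i/√(d_γ))^(k−1) ∫_σ f(z)·Q_γ(z,1)^(k−1) dz)` is the same for all piecewise `C¹`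
paths `σ` in `ℍ ∖ S` from `z₀` to `γz₀`. -/
theorem geodesic_pairing_path_independent (k : ℕ) (hk : 2 ≤ k) (n : ℕ) (ϱ : Fin n → ℂ)
    (hϱ : ∀ i, ϱ i ∈ UH) (S : Set ℂ) (hS : S = ⋃ i, orbit (ϱ i)) (f : ℂ → ℂ)
    (hf : DifferentiableOn ℂ f (UH \ S))
    (htrans : ∀ γ : SL2Z, ∀ z ∈ UH \ S,
      f (moeb γ z) = ((γ.1 1 0 : ℂ) * z + (γ.1 1 1 : ℂ)) ^ (2 * k) * f z)
    (hpole : ∀ ρ ∈ S, ∃ aρ : ℝ, ∃ δ > 0, ∃ Cb : ℝ,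
      ∀ z ∈ (Metric.ball ρ δ \ {ρ}) ∩ (UH \ S),
        ‖f z - (aρ : ℂ) * polePart k ρ z‖ ≤ Cb)
    (γ : SL2Z) (hhyp : IsHyperbolic γ) (hprim : IsPrimitive γ)
    (z₀ : ℂ) (hz₀ : z₀ ∈ UH \ S) (σ₁ σ₂ : ℝ → ℂ)
    (hσ₁ : PiecewiseC1 σ₁) (hσ₂ : PiecewiseC1 σ₂)
    (h10 : σ₁ 0 = z₀) (h11 : σ₁ 1 = moeb γ z₀)
    (h20 : σ₂ 0 = z₀) (h21 : σ₂ 1 = moeb γ z₀)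
    (hin1 : ∀ t ∈ Set.Icc (0 : ℝ) 1, σ₁ t ∈ UH \ S)
    (hin2 : ∀ t ∈ Set.Icc (0 : ℝ) 1, σ₂ t ∈ UH \ S) :
    (geodFactor k γ * pathInt (fun z => f z * Qpoly γ z ^ (k - 1)) σ₁).re =
      (geodFactor k γ * pathInt (fun z => f z * Qpoly γ z ^ (k - 1)) σ₂).re := by
  obtain ⟨N, rfl⟩ : ∃ N, k = N + 1 := ⟨k - 1, by omega⟩
  simp only [Nat.add_sub_cancel]
  have hK : IsCompact (σ₁ '' Set.Icc 0 1 ∪ σ₂ '' Set.Icc 0 1) :=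
    (isCompact_Icc.image_of_continuousOn hσ₁.1).union (isCompact_Icc.image_of_continuousOn hσ₂.1)
  obtain ⟨c, r, hKb, hball⟩ := exists_ball hK (by
    rintro z (⟨t, ht, rfl⟩ | ⟨t, ht, rfl⟩)
    · exact (hin1 t ht).1
    · exact (hin2 t ht).1)
  have hVU : Metric.ball c r ⊆ UH := Metric.ball_subset_closedBall.trans hball
  have hfin : (S ∩ Metric.ball c r).Finite := by
    rw [hS, Set.iUnion_inter]
    refine Set.finite_iUnion fun i => ?_
    exact (orbit_finite (hϱ i) (isCompact_closedBall c r) hball).subset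
      (Set.inter_subset_inter_right _ Metric.ball_subset_closedBall)
  obtain ⟨H, hH⟩ := main_RP N S f hf hpole γ c r hVU hfin
  have hcont : ContinuousOn (fun z => geodFactor (N + 1) γ * (f z * Qpoly γ z ^ N))
      (Metric.ball c r \ S) := by
    refine continuousOn_const.mul (ContinuousOn.mul ?_ ((Qpoly_diff γ).pow N).continuous.continuousOn)
    exact hf.continuousOn.mono (Set.sdiff_subset_sdiff_left hVU)
  have hmul : ∀ σ : ℝ → ℂ, geodFactor (N + 1) γ * pathInt (fun z => f z * Qpoly γ z ^ N) σ
      = pathInt (fun z => geodFactor (N + 1) γ * (f z * Qpoly γ z ^ N)) σ := by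
    intro σ
    rw [pathInt, pathInt, ← intervalIntegral.integral_const_mul]
    simp only [mul_assoc]
  rw [hmul, hmul, pathInt_re hH hcont hσ₁, pathInt_re hH hcont hσ₂, h10, h11, h20, h21]
  · exact fun t ht => ⟨hKb (Or.inr ⟨t, ht, rfl⟩), (hin2 t ht).2⟩
  · exact fun t ht => ⟨hKb (Or.inl ⟨t, ht, rfl⟩), (hin1 t ht).2⟩
end
end

section
/- Let k ≥ 2 be an integer and ϱ ∈ ℍ. Then: (i) the Petersson Poincaré series η_{k,ϱ} is holomorphic on ℍ ∖ SL₂(ℤ)ϱ; (ii) if ϱ has trivial stabilizer in PSL₂(ℤ) (that is, γϱ = ϱ for γ ∈ SL₂(ℤ) implies γ = ±I), then the function z ↦ η_{k,ϱ}(z) − ((z−ϱ)(z−conj(ϱ))/(ϱ−conj(ϱ)))^{−k} extends to a holomorphic function on a neighborhood of ϱ; (iii) η_{k,ϱ}(z) → 0 as Im(z) → ∞, uniformly in Re(z). (In other words, η_{k,ϱ} is a meromorphic modular form of weight 2k for SL₂(ℤ) vanishing at the cusp, with residue divisor [ϱ].) -/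
open Complex ComplexConjugate Metric Set MeasureTheory

noncomputable section

/-- A single term of the Petersson Poincaré series:
`((γz − ϱ)(γz − conj ϱ)/(ϱ − conj ϱ))^(−k) · (cz + d)^(−2k)`. -/
def etaTerm (k : ℕ) (ϱ z : ℂ) (γ : SL2Z) : ℂ :=
  ((moeb γ z - ϱ) * (moeb γ z - conj ϱ) / (ϱ - conj ϱ)) ^ (-(k : ℤ)) *
    ((γ.1 1 0 : ℂ) * z + (γ.1 1 1 : ℂ)) ^ (-(2 * k : ℤ))

/-- The Petersson Poincaré series `η_{k,ϱ}(z)`. -/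
def etaP (k : ℕ) (ϱ z : ℂ) : ℂ := (1 / 2 : ℂ) * ∑' γ : SL2Z, etaTerm k ϱ z γ

/-- squared Frobenius norm -/
def N2 (γ : SL2Z) : ℝ :=
  (γ.1 0 0 : ℝ) ^ 2 + (γ.1 0 1 : ℝ) ^ 2 + (γ.1 1 0 : ℝ) ^ 2 + (γ.1 1 1 : ℝ) ^ 2

lemma det_eq (γ : SL2Z) : γ.1 0 0 * γ.1 1 1 - γ.1 0 1 * γ.1 1 0 = 1 := by
  have := γ.2
  rwa [Matrix.det_fin_two] at this

lemma det_eqR (γ : SL2Z) :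
    (γ.1 0 0 : ℝ) * γ.1 1 1 - (γ.1 0 1 : ℝ) * γ.1 1 0 = 1 := by
  exact_mod_cast det_eq γ

lemma ac_ge_one (γ : SL2Z) : 1 ≤ (γ.1 0 0 : ℝ) ^ 2 + (γ.1 1 0 : ℝ) ^ 2 := by
  have h := det_eq γ
  have : 1 ≤ (γ.1 0 0) ^ 2 + (γ.1 1 0) ^ 2 := by
    by_contra hc
    have h1 : γ.1 0 0 = 0 := by nlinarith [sq_nonneg (γ.1 0 0), sq_nonneg (γ.1 1 0)]
    have h2 : γ.1 1 0 = 0 := by nlinarith [sq_nonneg (γ.1 0 0), sq_nonneg (γ.1 1 0)]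
    rw [h1, h2] at h
    simp at h
  exact_mod_cast this

lemma N2_ge_one (γ : SL2Z) : 1 ≤ N2 γ := by
  unfold N2
  nlinarith [ac_ge_one γ, sq_nonneg (γ.1 0 1 : ℝ), sq_nonneg (γ.1 1 1 : ℝ)]

/-- injection into `ℤ² × ℤ` -/
def inj (γ : SL2Z) : (Fin 2 → ℤ) × ℤ :=
  (![γ.1 1 0, γ.1 1 1], if γ.1 1 0 = 0 then γ.1 0 1 else γ.1 0 0)

lemma inj_injective : Function.Injective inj := by
  intro γ γ' h
  unfold inj at h
  simp only [Prod.mk.injEq] at h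
  obtain ⟨h1, h2⟩ := h
  have hc : γ.1 1 0 = γ'.1 1 0 := by simpa using congrFun h1 0
  have hd : γ.1 1 1 = γ'.1 1 1 := by simpa using congrFun h1 1
  have e1 := det_eq γ
  have e2 := det_eq γ'
  have key : γ.1 0 0 = γ'.1 0 0 ∧ γ.1 0 1 = γ'.1 0 1 := by
    rw [← hc] at h2
    rw [← hc, ← hd] at e2
    by_cases h0 : γ.1 1 0 = 0
    · simp only [h0, if_true] at h2
      refine ⟨?_, h2⟩
      rw [h0] at e1 e2
      have hd0 : γ.1 1 1 ≠ 0 := by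
        intro hh; rw [hh] at e1; simp at e1
      apply mul_right_cancel₀ hd0
      linarith
    · simp only [h0, if_false] at h2
      refine ⟨h2, ?_⟩
      apply mul_right_cancel₀ h0
      rw [h2] at e1
      linarith
  ext i j
  fin_cases i <;> fin_cases j
  · exact key.1
  · exact key.2
  · exact hc
  · exact hd

lemma summable_max : Summable (fun n : ℤ => (max 1 |(n : ℝ)|) ^ (-(5/4) : ℝ)) := by
  have h1 : Summable (fun n : ℤ => |(n : ℝ)| ^ (-(5/4) : ℝ)) :=
    Real.summable_abs_int_rpow (by norm_num)
  have h2 : Summable (fun n : ℤ => if n = 0 then (1 : ℝ) else 0) :=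
    (hasSum_ite_eq (0 : ℤ) (1 : ℝ)).summable
  refine Summable.of_nonneg_of_le (fun n => by positivity) (fun n => ?_) (h1.add h2)
  by_cases hn : n = 0
  · subst hn; norm_num
  · have : (1 : ℝ) ≤ |(n : ℝ)| := by exact_mod_cast Int.one_le_abs hn
    rw [max_eq_right this]; simp [hn]

lemma summable_N2 : Summable (fun γ : SL2Z => (N2 γ) ^ (-(7/4) : ℝ)) := by
  have h1 : Summable (fun x : Fin 2 → ℤ => ‖x‖ ^ (-(9/4) : ℝ)) :=
    EisensteinSeries.summable_one_div_norm_rpow (by norm_num)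
  have h := (h1.mul_of_nonneg summable_max (fun x => by positivity)
    (fun n => by positivity)).comp_injective inj_injective
  refine Summable.of_nonneg_of_le (fun γ => ?_) (fun γ => ?_) h
  · have := N2_ge_one γ; positivity
  have hN := N2_ge_one γ
  have hx1 : (1 : ℝ) ≤ ‖(inj γ).1‖ := by
    have : (inj γ).1 ≠ 0 := by
      intro h0
      have hc : γ.1 1 0 = 0 := by simpa [inj] using congrFun h0 0
      have hd : γ.1 1 1 = 0 := by simpa [inj] using congrFun h0 1
      have := det_eq γ
      simp [hc, hd] at this
    rw [EisensteinSeries.norm_eq_max_natAbs]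
    have h2 : (inj γ).1 0 ≠ 0 ∨ (inj γ).1 1 ≠ 0 := by
      by_contra hcon
      push Not at hcon
      apply this
      ext i; fin_cases i
      · exact hcon.1
      · exact hcon.2
    have h3 : 1 ≤ max ((inj γ).1 0).natAbs ((inj γ).1 1).natAbs := by omega
    exact_mod_cast h3
  have hs : ∀ i : Fin 2, ∀ j : Fin 2, |(γ.1 i j : ℝ)| ≤ (N2 γ) ^ (1/2 : ℝ) := by
    intro i j
    rw [← Real.sqrt_eq_rpow]
    apply Real.abs_le_sqrt
    unfold N2
    fin_cases i <;> fin_cases j <;> simp <;> nlinarith [sq_nonneg (γ.1 0 0 : ℝ),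
      sq_nonneg (γ.1 0 1 : ℝ), sq_nonneg (γ.1 1 0 : ℝ), sq_nonneg (γ.1 1 1 : ℝ)]
  have hone : (1 : ℝ) ≤ (N2 γ) ^ (1/2 : ℝ) := Real.one_le_rpow hN (by norm_num)
  have hx : ‖(inj γ).1‖ ≤ (N2 γ) ^ (1/2 : ℝ) := by
    rw [pi_norm_le_iff_of_nonneg (by positivity)]
    intro i
    fin_cases i
    · simpa [inj, Int.norm_eq_abs] using hs 1 0
    · simpa [inj, Int.norm_eq_abs] using hs 1 1
  have hn : max 1 |((inj γ).2 : ℝ)| ≤ (N2 γ) ^ (1/2 : ℝ) := by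
    refine max_le hone ?_
    unfold inj
    dsimp only
    split_ifs
    · exact hs 0 1
    · exact hs 0 0
  have hN0 : 0 < N2 γ := by linarith
  calc (N2 γ) ^ (-(7/4) : ℝ)
      = ((N2 γ) ^ (1/2 : ℝ)) ^ (-(9/4) : ℝ) * ((N2 γ) ^ (1/2 : ℝ)) ^ (-(5/4) : ℝ) := by
        rw [← Real.rpow_mul hN0.le, ← Real.rpow_mul hN0.le, ← Real.rpow_add hN0]
        norm_num
    _ ≤ ‖(inj γ).1‖ ^ (-(9/4) : ℝ) * (max 1 |((inj γ).2 : ℝ)|) ^ (-(5/4) : ℝ) := by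
        apply mul_le_mul _ _ (by positivity) (by positivity)
        · exact Real.rpow_le_rpow_of_nonpos (by linarith) hx (by norm_num)
        · exact Real.rpow_le_rpow_of_nonpos (by positivity) hn (by norm_num)

/-- `az+b-w(cz+d)` -/
def lin (γ : SL2Z) (w z : ℂ) : ℂ :=
  ((γ.1 0 0 : ℂ) * z + (γ.1 0 1 : ℂ)) - w * ((γ.1 1 0 : ℂ) * z + (γ.1 1 1 : ℂ))

lemma cd_ne (γ : SL2Z) {z : ℂ} (hz : 0 < z.im) :
    ((γ.1 1 0 : ℂ) * z + (γ.1 1 1 : ℂ)) ≠ 0 := by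
  intro h
  have him := congrArg Complex.im h
  have hre := congrArg Complex.re h
  simp at him hre
  have hd := det_eq γ
  rcases him with h0 | h0
  · rw [h0] at hre hd
    simp at hre
    rw [hre] at hd
    simp at hd
  · exact hz.ne' h0

lemma etaTerm_eq (k : ℕ) (ϱ z : ℂ) (hz : 0 < z.im) (γ : SL2Z) :
    etaTerm k ϱ z γ = (ϱ - conj ϱ) ^ k * ((lin γ ϱ z * lin γ (conj ϱ) z) ^ k)⁻¹ := by
  have h := cd_ne γ hz
  have e : ∀ w, moeb γ z - w = lin γ w z / ((γ.1 1 0 : ℂ) * z + (γ.1 1 1 : ℂ)) := by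
    intro w
    unfold moeb lin
    rw [sub_div, mul_div_cancel_right₀ _ h]
  unfold etaTerm
  rw [e, e]
  set v := ((γ.1 1 0 : ℂ) * z + (γ.1 1 1 : ℂ))
  have e2 : v ^ (-(2 * k : ℤ)) = ((v ^ 2) ^ k)⁻¹ := by
    rw [zpow_neg, ← pow_mul]; norm_cast
  rw [e2, zpow_neg, zpow_natCast, ← inv_pow, ← inv_pow, ← inv_pow _ k, ← mul_pow, ← mul_pow]
  congr 1
  by_cases h1 : lin γ ϱ z * lin γ (conj ϱ) z = 0
  · rcases mul_eq_zero.1 h1 with h1 | h1 <;> simp [h1]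
  by_cases h2 : ϱ - conj ϱ = 0
  · simp [h2]
  have h3 := left_ne_zero_of_mul h1
  have h4 := right_ne_zero_of_mul h1
  field_simp

lemma lin_sq (γ : SL2Z) (ϱ z : ℂ) :
    ‖lin γ ϱ z‖ ^ 2 = ‖lin γ (conj ϱ) z‖ ^ 2 - 4 * z.im * ϱ.im := by
  have hd := det_eqR γ
  rw [← Complex.normSq_eq_norm_sq, ← Complex.normSq_eq_norm_sq, Complex.normSq_apply,
    Complex.normSq_apply]
  unfold lin
  simp
  linear_combination (-4 * z.im * ϱ.im) * hd

lemma lower (ϱ : ℂ) (hϱ : 0 < ϱ.im) (A B : ℝ) (hB : 0 < B) :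
    ∃ C : ℝ, 0 < C ∧ ∀ z : ℂ, |z.re| ≤ A → B ≤ z.im → ∀ γ : SL2Z,
      N2 γ ≤ C * ‖lin γ (conj ϱ) z‖ ^ 2 ∧ z.im ^ 2 ≤ C * ‖lin γ (conj ϱ) z‖ ^ 2 := by
  set K : ℝ := 2 + 2 * A ^ 2 / B ^ 2 + 1 / B ^ 2 with hK
  set L : ℝ := (1 + ‖ϱ‖ / ϱ.im) ^ 2 + (1 / ϱ.im) ^ 2 with hL
  have hK1 : 1 ≤ K := by
    have : 0 ≤ 2 * A ^ 2 / B ^ 2 + 1 / B ^ 2 := by positivity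
    linarith
  have hL0 : 0 < L := by positivity
  refine ⟨K * L, by positivity, fun z hx hy γ => ?_⟩
  have hy0 : 0 < z.im := by linarith
  -- real forms
  have comp : ∀ a b : ℝ, ‖(a : ℂ) * z + b‖ ^ 2 = (a * z.re + b) ^ 2 + (a * z.im) ^ 2 := by
    intro a b
    rw [← Complex.normSq_eq_norm_sq, Complex.normSq_apply]
    simp; ring
  have hxA : z.re ^ 2 ≤ A ^ 2 := by
    rw [← sq_abs]; gcongr
  have one : ∀ a b : ℝ, a ^ 2 + b ^ 2 ≤ K * ‖(a : ℂ) * z + b‖ ^ 2 := by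
    intro a b
    rw [comp]
    have h1 : b ^ 2 ≤ 2 * (a * z.re + b) ^ 2 + 2 * (a ^ 2 * z.re ^ 2) := by
      nlinarith [sq_nonneg (a * z.re + b + a * z.re)]
    have h2 : a ^ 2 * z.re ^ 2 ≤ a ^ 2 * A ^ 2 := by gcongr
    have h3 : a ^ 2 * B ^ 2 ≤ (a * z.im) ^ 2 := by
      rw [mul_pow]; gcongr
    have h4 : a ^ 2 ≤ (1 / B ^ 2) * (a * z.im) ^ 2 := by
      rw [one_div, inv_mul_eq_div, le_div_iff₀ (by positivity)]; exact h3
    have h5 : 2 * (a ^ 2 * A ^ 2) ≤ (2 * A ^ 2 / B ^ 2) * (a * z.im) ^ 2 := by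
      calc 2 * (a ^ 2 * A ^ 2) = 2 * A ^ 2 * a ^ 2 := by ring
        _ ≤ 2 * A ^ 2 * ((1 / B ^ 2) * (a * z.im) ^ 2) := by gcongr
        _ = _ := by ring
    have h6 : 0 ≤ (2 * A ^ 2 / B ^ 2 + 1 / B ^ 2) * (a * z.re + b) ^ 2 := by positivity
    have h7 : 0 ≤ (a * z.im) ^ 2 := by positivity
    rw [hK]
    nlinarith
  have hsq := lin_sq γ ϱ z
  set u : ℂ := (γ.1 0 0 : ℂ) * z + (γ.1 0 1 : ℂ) with hu
  set v : ℂ := (γ.1 1 0 : ℂ) * z + (γ.1 1 1 : ℂ) with hv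
  set D : ℝ := ‖lin γ (conj ϱ) z‖ with hD
  have hle : ‖lin γ ϱ z‖ ≤ D := by
    apply le_of_sq_le_sq _ (norm_nonneg _) 
    have : 0 < z.im * ϱ.im := by positivity
    nlinarith
  have hv1 : ‖v‖ ≤ D / ϱ.im := by
    rw [le_div_iff₀ hϱ]
    have e : (2 * ϱ.im : ℂ) * I * v = lin γ (conj ϱ) z - lin γ ϱ z := by
      have : (ϱ - conj ϱ) = (2 * ϱ.im : ℂ) * I := by
        rw [Complex.sub_conj]; push_cast; ring
      rw [← this]; unfold lin; ring
    have e2 := norm_sub_le (lin γ (conj ϱ) z) (lin γ ϱ z)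
    rw [← e] at e2
    simp [abs_of_pos hϱ] at e2
    nlinarith
  have hu1 : ‖u‖ ≤ (1 + ‖ϱ‖ / ϱ.im) * D := by
    have e : u = lin γ (conj ϱ) z + conj ϱ * v := by unfold lin; ring
    calc ‖u‖ ≤ ‖lin γ (conj ϱ) z‖ + ‖conj ϱ * v‖ := by rw [e]; exact norm_add_le _ _
      _ = D + ‖ϱ‖ * ‖v‖ := by rw [norm_mul, Complex.norm_conj]
      _ ≤ D + ‖ϱ‖ * (D / ϱ.im) := by gcongr
      _ = _ := by ring
  have huv : ‖u‖ ^ 2 + ‖v‖ ^ 2 ≤ L * D ^ 2 := by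
    have a1 : ‖u‖ ^ 2 ≤ ((1 + ‖ϱ‖ / ϱ.im) * D) ^ 2 := by gcongr
    have a2 : ‖v‖ ^ 2 ≤ (D / ϱ.im) ^ 2 := by gcongr
    calc _ ≤ _ := add_le_add a1 a2
      _ = _ := by rw [hL]; ring
  have ou := one (γ.1 0 0) (γ.1 0 1)
  have ov := one (γ.1 1 0) (γ.1 1 1)
  have cu := comp (γ.1 0 0) (γ.1 0 1)
  have cv := comp (γ.1 1 0) (γ.1 1 1)
  simp only [Complex.ofReal_intCast] at ou ov cu cv
  rw [← hu] at ou cu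
  rw [← hv] at ov cv
  constructor
  · unfold N2
    calc _ ≤ K * (‖u‖ ^ 2 + ‖v‖ ^ 2) := by linarith
      _ ≤ K * (L * D ^ 2) := by gcongr
      _ = _ := by ring
  · have hac := ac_ge_one γ
    have : z.im ^ 2 ≤ ‖u‖ ^ 2 + ‖v‖ ^ 2 := by
      rw [cu, cv]
      nlinarith [sq_nonneg ((γ.1 0 0 : ℝ) * z.re + (γ.1 0 1 : ℝ)),
        sq_nonneg ((γ.1 1 0 : ℝ) * z.re + (γ.1 1 1 : ℝ)), sq_nonneg z.im,
        mul_le_mul_of_nonneg_right hac (sq_nonneg z.im)]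
    calc _ ≤ L * D ^ 2 := this.trans huv
      _ ≤ K * (L * D ^ 2) := le_mul_of_one_le_left (by positivity) hK1
      _ = _ := by ring

lemma term_bound (k : ℕ) (hk : 2 ≤ k) (ϱ z : ℂ) (hϱ : 0 < ϱ.im) (hz : 0 < z.im) (γ : SL2Z)
    (C : ℝ) (hC : 0 < C) (h1 : N2 γ ≤ C * ‖lin γ (conj ϱ) z‖ ^ 2)
    (h2 : z.im ^ 2 ≤ C * ‖lin γ (conj ϱ) z‖ ^ 2)
    (h3 : 8 * z.im * ϱ.im ≤ ‖lin γ (conj ϱ) z‖ ^ 2) :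
    lin γ ϱ z * lin γ (conj ϱ) z ≠ 0 ∧
    ‖etaTerm k ϱ z γ‖ ≤ (4 * C * ϱ.im) ^ k * ((N2 γ) ^ (-(7/4) : ℝ) * z.im ^ (-(1/2) : ℝ)) := by
  have hsq := lin_sq γ ϱ z
  have hN := N2_ge_one γ
  set D : ℝ := ‖lin γ (conj ϱ) z‖ with hD
  have hW : 0 < D ^ 2 := lt_of_lt_of_le (by positivity) h3
  have hDn : 0 ≤ D := norm_nonneg _
  have hE : D / 2 ≤ ‖lin γ ϱ z‖ := by
    apply le_of_sq_le_sq _ (norm_nonneg _)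
    rw [hsq]; nlinarith
  have hQ : D ^ 2 / 2 ≤ ‖lin γ ϱ z * lin γ (conj ϱ) z‖ := by
    rw [norm_mul, ← hD]; nlinarith
  constructor
  · intro h0
    rw [h0, norm_zero] at hQ; linarith
  rw [etaTerm_eq k ϱ z hz, norm_mul, norm_inv, norm_pow, norm_pow]
  have hr : ‖ϱ - conj ϱ‖ = 2 * ϱ.im := by
    rw [Complex.sub_conj]; simp [abs_of_pos hϱ]
  rw [hr]
  set X : ℝ := C * D ^ 2 with hX
  have hX1 : 1 ≤ X := hN.trans h1
  have hXk : (N2 γ) ^ (7/4 : ℝ) * z.im ^ (1/2 : ℝ) ≤ X ^ k := by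
    calc (N2 γ) ^ (7/4 : ℝ) * z.im ^ (1/2 : ℝ)
        = (N2 γ) ^ (7/4 : ℝ) * (z.im ^ 2) ^ (1/4 : ℝ) := by
          congr 1
          rw [← Real.rpow_natCast, ← Real.rpow_mul hz.le]; norm_num
      _ ≤ X ^ (7/4 : ℝ) * X ^ (1/4 : ℝ) := by gcongr
      _ = X ^ 2 := by
          rw [← Real.rpow_add (by linarith), ← Real.rpow_natCast]; norm_num
      _ ≤ X ^ k := pow_le_pow_right₀ hX1 hk
  have hN0 : 0 < N2 γ := by linarith
  rw [Real.rpow_neg hN0.le, Real.rpow_neg hz.le, ← mul_inv]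
  calc (2 * ϱ.im) ^ k * (‖lin γ ϱ z * lin γ (conj ϱ) z‖ ^ k)⁻¹
      ≤ (2 * ϱ.im) ^ k * ((D ^ 2 / 2) ^ k)⁻¹ := by gcongr
    _ = (4 * C * ϱ.im) ^ k * (X ^ k)⁻¹ := by
        rw [← inv_pow, ← inv_pow, ← mul_pow, ← mul_pow, hX]
        congr 1
        field_simp; norm_num
    _ ≤ _ := by gcongr

lemma lin_conj_ne (γ : SL2Z) (ϱ z : ℂ) (hϱ : 0 < ϱ.im) (hz : 0 < z.im) :
    lin γ (conj ϱ) z ≠ 0 := by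
  intro h
  have := lin_sq γ ϱ z
  rw [h] at this
  have h2 : 0 < z.im * ϱ.im := by positivity
  simp at this
  nlinarith [sq_nonneg ‖lin γ ϱ z‖]

lemma moeb_of_lin (γ : SL2Z) (ϱ z : ℂ) (hz : 0 < z.im) (h : lin γ ϱ z = 0) :
    moeb γ z = ϱ := by
  unfold moeb
  rw [div_eq_iff (cd_ne γ hz)]
  exact sub_eq_zero.1 h

lemma orbit_of_lin (γ : SL2Z) (ϱ z : ℂ) (hϱ : 0 < ϱ.im) (h : lin γ ϱ z = 0) :
    z ∈ orbit ϱ := by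
  refine ⟨γ⁻¹, ?_⟩
  have h0 := cd_ne γ⁻¹ hϱ
  unfold moeb
  rw [eq_div_iff h0]
  rw [Matrix.SpecialLinearGroup.SL2_inv_expl]
  simp
  unfold lin at h
  linear_combination h

lemma uh_open : IsOpen UH := isOpen_lt continuous_const Complex.continuous_im

lemma lin_cont (γ : SL2Z) (w : ℂ) : Differentiable ℂ (lin γ w) := by
  unfold lin
  fun_prop

lemma term_diff (k : ℕ) (ϱ z : ℂ) (hϱ : 0 < ϱ.im) (hz : 0 < z.im) (γ : SL2Z)
    (h : lin γ ϱ z ≠ 0) : DifferentiableAt ℂ (fun z => etaTerm k ϱ z γ) z := by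
  have h2 := lin_conj_ne γ ϱ z hϱ hz
  have e : (fun z => etaTerm k ϱ z γ) =ᶠ[nhds z]
      fun z => (ϱ - conj ϱ) ^ k * ((lin γ ϱ z * lin γ (conj ϱ) z) ^ k)⁻¹ := by
    filter_upwards [uh_open.mem_nhds hz] with w hw
    exact etaTerm_eq k ϱ w hw γ
  rw [e.differentiableAt_iff]
  refine DifferentiableAt.const_mul (DifferentiableAt.fun_inv (DifferentiableAt.fun_pow
    (DifferentiableAt.fun_mul (lin_cont γ _ z) (lin_cont γ _ z)) k) ?_) _
  exact pow_ne_zero _ (mul_ne_zero h h2)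

lemma local_rep (k : ℕ) (hk : 2 ≤ k) (ϱ : ℂ) (hϱ : 0 < ϱ.im) (z₀ : ℂ) (hz₀ : 0 < z₀.im) :
    ∃ r > 0, Metric.ball z₀ r ⊆ UH ∧ ∃ S : Finset SL2Z, 1 ∈ S ∧ -1 ∈ S ∧ ∃ h : ℂ → ℂ,
      DifferentiableOn ℂ h (Metric.ball z₀ r) ∧ ∀ z ∈ Metric.ball z₀ r,
        etaP k ϱ z = 1 / 2 * (∑ γ ∈ S, etaTerm k ϱ z γ + h z) := by
  set r : ℝ := z₀.im / 2 with hr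
  have hr0 : 0 < r := by positivity
  obtain ⟨C, hC, hlow⟩ := lower ϱ hϱ (|z₀.re| + r) r hr0
  have hre : ∀ z ∈ Metric.ball z₀ r, |z.re| ≤ |z₀.re| + r := by
    intro z hz
    rw [mem_ball, dist_eq_norm] at hz
    have h1 := (Complex.abs_re_le_norm (z - z₀)).trans hz.le
    rw [Complex.sub_re] at h1
    have := abs_sub_abs_le_abs_sub z.re z₀.re
    linarith
  have him : ∀ z ∈ Metric.ball z₀ r, r ≤ z.im ∧ z.im ≤ 3 * r := by
    intro z hz
    rw [mem_ball, dist_eq_norm] at hz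
    have h1 := (Complex.abs_im_le_norm (z - z₀)).trans hz.le
    rw [Complex.sub_im, abs_le] at h1
    constructor <;> linarith [h1.1, h1.2]
  set R : ℝ := C * (24 * r * ϱ.im) with hR
  have hR0 : 0 < R := by positivity
  have hfin : {γ : SL2Z | N2 γ ≤ R}.Finite := by
    have h := summable_N2.tendsto_cofinite_zero.eventually
      (gt_mem_nhds (show (0 : ℝ) < R ^ (-(7/4) : ℝ) by positivity))
    rw [Filter.eventually_cofinite] at h
    refine h.subset ?_
    intro γ hγ
    simp only [mem_ofPred_eq, not_lt] at hγ ⊢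
    have := N2_ge_one γ
    exact Real.rpow_le_rpow_of_nonpos (by linarith) hγ (by norm_num)
  classical
  set S : Finset SL2Z := hfin.toFinset ∪ {1, -1} with hS
  have key : ∀ z ∈ Metric.ball z₀ r, ∀ γ : SL2Z, γ ∉ S →
      lin γ ϱ z * lin γ (conj ϱ) z ≠ 0 ∧
      ‖etaTerm k ϱ z γ‖ ≤ (4 * C * ϱ.im) ^ k * ((N2 γ) ^ (-(7/4) : ℝ) * r ^ (-(1/2) : ℝ)) := by
    intro z hz γ hγ
    have hγ' : R < N2 γ := by
      by_contra hcon
      apply hγ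
      simp [hS, not_lt.1 hcon]
    obtain ⟨i1, i2⟩ := him z hz
    have hz0 : 0 < z.im := by linarith
    obtain ⟨b1, b2⟩ := hlow z (hre z hz) i1 γ
    have b3 : 8 * z.im * ϱ.im ≤ ‖lin γ (conj ϱ) z‖ ^ 2 := by
      have : 24 * r * ϱ.im ≤ ‖lin γ (conj ϱ) z‖ ^ 2 :=
        le_of_mul_le_mul_left (hγ'.le.trans b1) hC
      nlinarith
    obtain ⟨c1, c2⟩ := term_bound k hk ϱ z hϱ hz0 γ C hC b1 b2 b3
    refine ⟨c1, c2.trans ?_⟩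
    have hN := N2_ge_one γ
    have : z.im ^ (-(1/2) : ℝ) ≤ r ^ (-(1/2) : ℝ) :=
      Real.rpow_le_rpow_of_nonpos hr0 i1 (by norm_num)
    gcongr
  have hsum : Summable (fun γ : SL2Z =>
      (4 * C * ϱ.im) ^ k * ((N2 γ) ^ (-(7/4) : ℝ) * r ^ (-(1/2) : ℝ))) :=
    (summable_N2.mul_right _).mul_left _
  have hsub : Metric.ball z₀ r ⊆ UH := fun z hz => lt_of_lt_of_le hr0 (him z hz).1
  refine ⟨r, hr0, hsub, S, by simp [hS], by simp [hS],
    fun z => ∑' γ : ((S : Set SL2Z)ᶜ : Set SL2Z), etaTerm k ϱ z γ, ?_, ?_⟩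
  · refine Complex.differentiableOn_tsum_of_summable_norm
      (hsum.subtype ((S : Set SL2Z)ᶜ)) ?_ Metric.isOpen_ball ?_
    · intro γ z hz
      exact (term_diff k ϱ z hϱ (hsub hz) γ
        (left_ne_zero_of_mul (key z hz γ γ.2).1)).differentiableWithinAt
    · intro γ z hz
      exact (key z hz γ γ.2).2
  · intro z hz
    unfold etaP
    congr 1
    have h1 : Summable (fun γ : ((S : Set SL2Z)ᶜ : Set SL2Z) => etaTerm k ϱ z γ) :=
      Summable.of_norm_bounded (hsum.subtype ((S : Set SL2Z)ᶜ))
        (fun γ => (key z hz γ γ.2).2)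
    have h2 : Summable (fun γ => etaTerm k ϱ z γ) :=
      (Finset.summable_compl_iff S).1 h1
    exact (h2.sum_add_tsum_compl (s := S)).symm

lemma etaTerm_one (k : ℕ) (ϱ z : ℂ) : etaTerm k ϱ z 1 = polePart k ϱ z := by
  simp [etaTerm, polePart, moeb]

lemma etaTerm_neg_one (k : ℕ) (ϱ z : ℂ) : etaTerm k ϱ z (-1) = polePart k ϱ z := by
  have : (-1 : ℂ) ^ (-(2 * k : ℤ)) = 1 := by
    rw [zpow_neg, zpow_mul]; norm_num
  simp [etaTerm, polePart, moeb, this]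

lemma one_ne_neg_one : (1 : SL2Z) ≠ -1 := by
  intro h
  have := congrArg (fun γ : SL2Z => γ.1 0 0) h
  norm_num at this

/-- translation matrix -/
def transl (m : ℤ) : SL2Z := ⟨!![1, m; 0, 1], by simp⟩

lemma etaP_add_int (k : ℕ) (ϱ z : ℂ) (m : ℤ) : etaP k ϱ (z + m) = etaP k ϱ z := by
  unfold etaP
  congr 1
  rw [← (Equiv.mulRight (transl m)).tsum_eq (fun γ => etaTerm k ϱ z γ)]
  apply tsum_congr
  intro γ
  have e : ∀ i, (γ * transl m).1 i 0 = γ.1 i 0 ∧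
      (γ * transl m).1 i 1 = γ.1 i 0 * m + γ.1 i 1 := by
    intro i
    have e0 : (γ * transl m).1 = γ.1 * !![1, m; 0, 1] := rfl
    rw [e0]
    constructor <;> simp [Matrix.mul_apply, Fin.sum_univ_two]
  simp only [Equiv.coe_mulRight, etaTerm, moeb, (e 0).1, (e 0).2, (e 1).1, (e 1).2]
  push_cast
  simp only [mul_add, add_assoc]

lemma cusp_bound (k : ℕ) (hk : 2 ≤ k) (ϱ : ℂ) (hϱ : 0 < ϱ.im) :
    ∃ T₀ : ℝ, ∃ M : ℝ, ∀ z : ℂ, T₀ < z.im → 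
      ‖etaP k ϱ z‖ ≤ M * z.im ^ (-(1/2) : ℝ) := by
  obtain ⟨C, hC, hlow⟩ := lower ϱ hϱ 1 1 one_pos
  refine ⟨max 1 (8 * C * ϱ.im), 1 / 2 * ((4 * C * ϱ.im) ^ k *
    ∑' γ : SL2Z, (N2 γ) ^ (-(7/4) : ℝ)), ?_⟩
  have main : ∀ z : ℂ, max 1 (8 * C * ϱ.im) < z.im → |z.re| ≤ 1 →
      ‖etaP k ϱ z‖ ≤ 1 / 2 * ((4 * C * ϱ.im) ^ k *
    ∑' γ : SL2Z, (N2 γ) ^ (-(7/4) : ℝ)) * z.im ^ (-(1/2) : ℝ) := by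
    intro z hz hx
    obtain ⟨h1, h2⟩ := max_lt_iff.1 hz
    have hz0 : 0 < z.im := by linarith
    have key : ∀ γ : SL2Z, ‖etaTerm k ϱ z γ‖ ≤
        (4 * C * ϱ.im) ^ k * ((N2 γ) ^ (-(7/4) : ℝ) * z.im ^ (-(1/2) : ℝ)) := by
      intro γ
      obtain ⟨b1, b2⟩ := hlow z hx h1.le γ
      refine (term_bound k hk ϱ z hϱ hz0 γ C hC b1 b2 ?_).2
      apply le_of_mul_le_mul_left _ hC
      refine le_trans ?_ b2
      nlinarith
    have hs := (summable_N2.mul_right (z.im ^ (-(1/2) : ℝ))).mul_left ((4 * C * ϱ.im) ^ k)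
    have := tsum_of_norm_bounded hs.hasSum key
    rw [tsum_mul_left, tsum_mul_right] at this
    unfold etaP
    rw [norm_mul]
    have e : ‖(1 / 2 : ℂ)‖ = 1 / 2 := by norm_num
    rw [e]
    calc _ ≤ _ := mul_le_mul_of_nonneg_left this (by norm_num)
      _ = _ := by ring
  intro z hz
  have hm := main (z + (-⌊z.re⌋ : ℤ)) (by simpa using hz) (by
    simp
    rw [← sub_eq_add_neg, Int.self_sub_floor, abs_of_nonneg (Int.fract_nonneg _)]
    exact (Int.fract_lt_one _).le)
  rw [etaP_add_int] at hm
  simpa using hm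

/-- For `k ≥ 2` and `ϱ ∈ ℍ`: (i) `η_{k,ϱ}` is holomorphic on `ℍ ∖ SL₂(ℤ)ϱ`;
(ii) if `ϱ` has trivial stabilizer in `PSL₂(ℤ)`, then
`z ↦ η_{k,ϱ}(z) − ((z−ϱ)(z−conj ϱ)/(ϱ−conj ϱ))^(−k)` extends holomorphically to a
neighborhood of `ϱ`; (iii) `η_{k,ϱ}(z) → 0` as `Im z → ∞`, uniformly in `Re z`. -/
theorem etaP_meromorphic_vanishing_at_cusp (k : ℕ) (hk : 2 ≤ k) (ϱ : ℂ) (hϱ : ϱ ∈ UH) :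
    DifferentiableOn ℂ (etaP k ϱ) (UH \ orbit ϱ) ∧
    ((∀ γ : SL2Z, moeb γ ϱ = ϱ → γ = 1 ∨ γ = -1) →
      ∃ ε > 0, Metric.ball ϱ ε ⊆ UH ∧ ∃ g : ℂ → ℂ,
        DifferentiableOn ℂ g (Metric.ball ϱ ε) ∧
        ∀ z ∈ Metric.ball ϱ ε \ {ϱ}, g z = etaP k ϱ z - polePart k ϱ z) ∧
    (∀ δ > 0, ∃ T : ℝ, ∀ z ∈ UH \ orbit ϱ, T < z.im → ‖etaP k ϱ z‖ < δ) := by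
  have hϱ' : 0 < ϱ.im := hϱ
  refine ⟨?_, ?_, ?_⟩
  · rintro z ⟨hz, hzo⟩
    obtain ⟨r, hr, hsub, S, -, -, h, hh, heq⟩ := local_rep k hk ϱ hϱ' z hz
    have hb : Metric.ball z r ∈ nhds z := Metric.ball_mem_nhds z hr
    have e : etaP k ϱ =ᶠ[nhds z] fun z => 1 / 2 * (∑ γ ∈ S, etaTerm k ϱ z γ + h z) := by
      filter_upwards [hb] with w hw using heq w hw
    refine DifferentiableAt.differentiableWithinAt ?_
    rw [e.differentiableAt_iff]
    refine DifferentiableAt.const_mul (DifferentiableAt.fun_add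
      (DifferentiableAt.fun_sum fun γ _ => term_diff k ϱ z hϱ' hz γ ?_)
      (hh.differentiableAt hb)) _
    intro h0
    exact hzo (orbit_of_lin γ ϱ z hϱ' h0)
  · intro hstab
    obtain ⟨r, hr, hsub, S, h1, h2, h, hh, heq⟩ := local_rep k hk ϱ hϱ' ϱ hϱ'
    classical
    set S' : Finset SL2Z := (S.erase 1).erase (-1) with hS'
    have hev : ∀ᶠ z in nhds ϱ, ∀ γ ∈ S', lin γ ϱ z ≠ 0 := by
      rw [Filter.eventually_all_finset]
      intro γ hγ
      refine (lin_cont γ ϱ).continuous.continuousAt.eventually_ne ?_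
      intro h0
      rcases hstab γ (moeb_of_lin γ ϱ ϱ hϱ' h0) with h3 | h3
      · simp [hS', h3] at hγ
      · simp [hS', h3] at hγ
    obtain ⟨ε, hε, hε'⟩ := Metric.eventually_nhds_iff_ball.1
      (hev.and (Metric.ball_mem_nhds ϱ hr))
    have hbr : Metric.ball ϱ ε ⊆ Metric.ball ϱ r := fun z hz => (hε' z hz).2
    refine ⟨ε, hε, hbr.trans hsub,
      fun z => 1 / 2 * (∑ γ ∈ S', etaTerm k ϱ z γ + h z), ?_, ?_⟩
    · intro z hz
      refine DifferentiableAt.differentiableWithinAt ?_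
      exact DifferentiableAt.const_mul (DifferentiableAt.fun_add
        (DifferentiableAt.fun_sum fun γ hγ => term_diff k ϱ z hϱ' (hsub (hbr hz)) γ
          ((hε' z hz).1 γ hγ))
        (hh.differentiableAt (Metric.isOpen_ball.mem_nhds (hbr hz)))) _
    · intro z hz
      rw [heq z (hbr hz.1), ← Finset.add_sum_erase S _ h1,
        ← Finset.add_sum_erase (S.erase 1) _
          (Finset.mem_erase.2 ⟨one_ne_neg_one.symm, h2⟩), etaTerm_one, etaTerm_neg_one]
      ring
  · intro δ hδ
    obtain ⟨T₀, M, hM⟩ := cusp_bound k hk ϱ hϱ'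
    have ht : Filter.Tendsto (fun y : ℝ => M * y ^ (-(1/2) : ℝ)) Filter.atTop (nhds 0) := by
      simpa using (tendsto_rpow_neg_atTop (show (0 : ℝ) < 1/2 by norm_num)).const_mul M
    obtain ⟨T₁, hT₁⟩ := Filter.eventually_atTop.1 (ht.eventually (gt_mem_nhds hδ))
    refine ⟨max T₀ T₁, fun z _ hz => ?_⟩
    obtain ⟨a1, a2⟩ := max_lt_iff.1 hz
    exact (hM z a1).trans_lt (hT₁ z.im a2.le)
end
end
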